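/- Let n ≥ 5 and 2 ≤ k ≤ n−2 be integers. The union of the D_n-orbits of the checkboard collection and the dual checkboard collection has exactly n elements: |{ ρ·C^ch_{k,n} : ρ ∈ D_n } ∪ { ρ·Ĉ^ch_{k,n} : ρ ∈ D_n }| = n. -/

import Mathlib

open Finset

/-- `(a,b,c,d)` is strictly cyclically ordered in `ℤ/nℤ`. -/
def StrictCyclicOrd {n : ℕ} (a b c d : ZMod n) : Prop :=
  0 < (b - a).val ∧ (b - a).val < (c - a).val ∧ (c - a).val < (d - a).val

/-- `I` and `J` are weakly separated subsets of `ℤ/nℤ`. -/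
def WeaklySep {n : ℕ} (I J : Finset (ZMod n)) : Prop :=
  ¬ ∃ a c b d : ZMod n, a ∈ I \ J ∧ c ∈ I \ J ∧ b ∈ J \ I ∧ d ∈ J \ I ∧
      StrictCyclicOrd a b c d

/-- The dihedral group `D_n`, realized as the subgroup of permutations of `ℤ/nℤ`
generated by `σ : i ↦ i + 1` and `τ : i ↦ 2 - i`. -/
def dihedral (n : ℕ) : Subgroup (Equiv.Perm (ZMod n)) :=
  Subgroup.closure {Equiv.addRight (1 : ZMod n), Equiv.subLeft (2 : ZMod n)}

/-- The set `[m] = {1, …, m} ⊆ ℤ/nℤ` (with `[0] = ∅`). -/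
def seg (n m : ℕ) : Finset (ZMod n) := (Finset.Icc 1 m).image (fun t : ℕ => (t : ZMod n))

/-- Rectangle label `I^rec_{i,j} = ([i+j]∖[i]) ∪ ([n]∖[n−k+j])`. -/
def Irec (k n i j : ℕ) : Finset (ZMod n) :=
  (seg n (i + j) \ seg n i) ∪ (seg n n \ seg n (n - k + j))

/-- Checkboard label `I^ch_{i,j} = σ^{−⌈(i+j)/2⌉} I^rec_{i,j}`. -/
def Ich (k n i j : ℕ) : Finset (ZMod n) :=
  (Irec k n i j).image (fun x => x - (((i + j + 1) / 2 : ℕ) : ZMod n))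

/-- Dual rectangle label `Î^rec_{i,j} = [i] ∪ ([k+j]∖[i+j])`. -/
def Drec (k n i j : ℕ) : Finset (ZMod n) :=
  seg n i ∪ (seg n (k + j) \ seg n (i + j))

/-- Dual checkboard label `Î^ch_{i,j} = σ^{−⌈(i+j)/2⌉} Î^rec_{i,j}`. -/
def Dch (k n i j : ℕ) : Finset (ZMod n) :=
  (Drec k n i j).image (fun x => x - (((i + j + 1) / 2 : ℕ) : ZMod n))

/-- The rectangle collection `C^rec_{k,n}`. -/
def Crec (k n : ℕ) : Finset (Finset (ZMod n)) :=
  ((Finset.range (n - k + 1)) ×ˢ (Finset.range (k + 1))).image (fun p => Irec k n p.1 p.2)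

/-- The checkboard collection `C^ch_{k,n}`. -/
def Cch (k n : ℕ) : Finset (Finset (ZMod n)) :=
  ((Finset.range (n - k + 1)) ×ˢ (Finset.range (k + 1))).image (fun p => Ich k n p.1 p.2)

/-- The dual rectangle collection `Ĉ^rec_{k,n}`. -/
def CDrec (k n : ℕ) : Finset (Finset (ZMod n)) :=
  ((Finset.range (k + 1)) ×ˢ (Finset.range (n - k + 1))).image (fun p => Drec k n p.1 p.2)

/-- The dual checkboard collection `Ĉ^ch_{k,n}`. -/
def CDch (k n : ℕ) : Finset (Finset (ZMod n)) :=
  ((Finset.range (k + 1)) ×ˢ (Finset.range (n - k + 1))).image (fun p => Dch k n p.1 p.2)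

/-- `C` is a weakly separated collection of `k`-subsets of `ℤ/nℤ`. -/
def IsWSColl (n k : ℕ) (C : Set (Finset (ZMod n))) : Prop :=
  (∀ I ∈ C, I.card = k) ∧ ∀ I ∈ C, ∀ J ∈ C, WeaklySep I J

/-- `C` is a maximal weakly separated collection of `k`-subsets of `ℤ/nℤ`. -/
def IsMaxWSColl (n k : ℕ) (C : Set (Finset (ZMod n))) : Prop :=
  IsWSColl n k C ∧ ∀ C' : Set (Finset (ZMod n)), IsWSColl n k C' → C ⊆ C' → C' = C


/-- integer arc `(p,q]` reduced mod `n` -/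
noncomputable def arcZ (n : ℕ) (p q : ℤ) : Finset (ZMod n) := (Finset.Ioc p q).image (fun x : ℤ => (x : ZMod n))

lemma mem_arcZ {n : ℕ} {p q : ℤ} {y : ZMod n} :
    y ∈ arcZ n p q ↔ ∃ x : ℤ, p < x ∧ x ≤ q ∧ (x : ZMod n) = y := by
  simp [arcZ, and_assoc]

lemma castZ_eq {n : ℕ} {a b : ℤ} : (a : ZMod n) = (b : ZMod n) ↔ ∃ m : ℤ, b = a + n * m := by
  rw [ZMod.intCast_eq_intCast_iff_dvd_sub]
  constructor
  · rintro ⟨m, hm⟩; exact ⟨m, by linarith⟩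
  · rintro ⟨m, hm⟩; exact ⟨m, by linarith⟩

lemma arcZ_add (n : ℕ) (p q r : ℤ) :
    (arcZ n p q).image (fun x => x + (r : ZMod n)) = arcZ n (p + r) (q + r) := by
  ext y
  simp only [Finset.mem_image, mem_arcZ]
  constructor
  · rintro ⟨_, ⟨x, h1, h2, rfl⟩, rfl⟩
    exact ⟨x + r, by omega, by omega, by push_cast; ring⟩
  · rintro ⟨x, h1, h2, rfl⟩
    exact ⟨_, ⟨x - r, by omega, by omega, rfl⟩, by push_cast; ring⟩

lemma arcZ_refl (n : ℕ) (p q : ℤ) :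
    (arcZ n p q).image (fun x => 1 - x) = arcZ n (-q) (-p) := by
  ext y
  simp only [Finset.mem_image, mem_arcZ]
  constructor
  · rintro ⟨_, ⟨x, h1, h2, rfl⟩, rfl⟩
    exact ⟨1 - x, by omega, by omega, by push_cast; ring⟩
  · rintro ⟨x, h1, h2, rfl⟩
    exact ⟨_, ⟨1 - x, by omega, by omega, rfl⟩, by push_cast; ring⟩

lemma arcZ_period (n : ℕ) (p q m : ℤ) : arcZ n (p + n * m) (q + n * m) = arcZ n p q := by
  have := arcZ_add n p q (n * m)
  rw [← this]; simp

lemma small_mul_zero {n m : ℤ} (h0 : 0 < n) (h1 : -n < n * m) (h2 : n * m < n) : m = 0 := by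
  have a : -1 < m := by by_contra h; push Not at h; nlinarith
  have b : m < 1 := by by_contra h; push Not at h; nlinarith
  omega

lemma seg_eq (n m : ℕ) : seg n m = arcZ n 0 m := by
  ext y
  simp only [seg, Finset.mem_image, Finset.mem_Icc, mem_arcZ]
  constructor
  · rintro ⟨x, h, rfl⟩
    exact ⟨x, by omega, by omega, by simp⟩
  · rintro ⟨x, h1, h2, rfl⟩
    lift x to ℕ using by omega
    exact ⟨x, by omega, by simp⟩

lemma seg_sdiff (n a b : ℕ) (hab : a ≤ b) (hb : b ≤ n) : seg n b \ seg n a = arcZ n a b := by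
  ext y
  rw [Finset.mem_sdiff, seg_eq, seg_eq]
  simp only [mem_arcZ]
  constructor
  · rintro ⟨⟨x, h1, h2, rfl⟩, h⟩
    refine ⟨x, ?_, h2, rfl⟩
    by_contra h'
    exact h ⟨x, h1, by omega, rfl⟩
  · rintro ⟨x, h1, h2, rfl⟩
    refine ⟨⟨x, by omega, h2, rfl⟩, ?_⟩
    rintro ⟨z, h3, h4, h5⟩
    obtain ⟨m, hm⟩ := castZ_eq.1 h5
    have := small_mul_zero (n := n) (m := m) (by omega) (by omega) (by omega)
    subst this; omega

/-- membership in the `t`-th collection -/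
def MemX (n k : ℕ) (t : ZMod n) (I : Finset (ZMod n)) : Prop :=
  ∃ e p f q : ℤ, e ≤ p ∧ p ≤ f ∧ f ≤ q ∧ q ≤ e + n ∧ (p - e) + (q - f) = k ∧
    (((p + q : ℤ) : ZMod n) = t ∨ ((p + q : ℤ) : ZMod n) = t - 1) ∧
    I = arcZ n e p ∪ arcZ n f q

lemma MemX.add {n k : ℕ} {t : ZMod n} {I} (h : MemX n k t I) (r : ℤ) :
    MemX n k (t + 2 * r) (I.image (fun x => x + (r : ZMod n))) := by
  obtain ⟨e, p, f, q, h1, h2, h3, h4, h5, h6, rfl⟩ := h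
  refine ⟨e + r, p + r, f + r, q + r, by omega, by omega, by omega, by omega, by omega, ?_, ?_⟩
  · push_cast at h6 ⊢
    rcases h6 with h6 | h6
    · left; linear_combination h6
    · right; linear_combination h6
  · rw [Finset.image_union, arcZ_add, arcZ_add]

lemma MemX.refl {n k : ℕ} {t : ZMod n} {I} (h : MemX n k t I) :
    MemX n k (k + 1 - t) (I.image (fun x => 1 - x)) := by
  obtain ⟨e, p, f, q, h1, h2, h3, h4, h5, h6, rfl⟩ := h
  refine ⟨-q, -f, -p, -e, by omega, by omega, by omega, by omega, by omega, ?_, ?_⟩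
  · have h5' : ((p : ZMod n) - e) + (q - f) = k := by exact_mod_cast congrArg (Int.cast : ℤ → ZMod n) h5
    push_cast at h6 ⊢
    rcases h6 with h6 | h6
    · right; linear_combination h5' - h6
    · left; linear_combination h5' - h6
  · rw [Finset.image_union, arcZ_refl, arcZ_refl, Finset.union_comm]

/-- normalisation of the representation: choose the winding number -/
lemma MemX.norm {n k : ℕ} {I} (s w : ℤ) (h : MemX n k (s : ZMod n) I) :
    ∃ e p f q : ℤ, e ≤ p ∧ p ≤ f ∧ f ≤ q ∧ q ≤ e + n ∧ (p - e) + (q - f) = k ∧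
    (p + q = s + n * w ∨ p + q = s - 1 + n * w) ∧
    I = arcZ n e p ∪ arcZ n f q := by
  obtain ⟨e, p, f, q, h1, h2, h3, h4, h5, h6, rfl⟩ := h
  have : ∃ m d : ℤ, (d = 0 ∨ d = 1) ∧ p + q = s - d + n * m := by
    rcases h6 with h6 | h6
    · obtain ⟨m, hm⟩ := castZ_eq.1 h6
      exact ⟨-m, 0, Or.inl rfl, by linarith⟩
    · obtain ⟨m, hm⟩ := castZ_eq.1 (h6.trans (show (s : ZMod n) - 1 = ((s - 1 : ℤ) : ZMod n) by push_cast; rfl))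
      exact ⟨-m, 1, Or.inr rfl, by linarith⟩
  obtain ⟨m, d, hd, hpq⟩ := this
  rcases Int.even_or_odd' (w - m) with ⟨u, hu | hu⟩
  · refine ⟨e + n * u, p + n * u, f + n * u, q + n * u, by omega, by omega, by omega, by omega,
      by omega, ?_, ?_⟩
    · have : (p + n * u) + (q + n * u) = s - d + n * w := by
        linear_combination hpq - (n : ℤ) * hu
      rcases hd with rfl | rfl
      · left; linarith
      · right; linarith
    · rw [arcZ_period, arcZ_period]
  · refine ⟨f + n * u, q + n * u, e + n * (u + 1), p + n * (u + 1), by omega, by linarith,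
      by linarith, by linarith, by linarith, ?_, ?_⟩
    · have : (q + n * u) + (p + n * (u + 1)) = s - d + n * w := by
        linear_combination hpq - (n : ℤ) * hu
      rcases hd with rfl | rfl
      · left; linarith
      · right; linarith
    · rw [arcZ_period, arcZ_period, Finset.union_comm]

lemma image_sub_nat {n : ℕ} (I : Finset (ZMod n)) (c : ℕ) :
    I.image (fun x => x - (c : ZMod n)) = I.image (fun x => x + ((-(c : ℤ) : ℤ) : ZMod n)) := by
  congr 1; funext x; push_cast; ring

lemma Ich_eq (k n i j : ℕ) (hk : k ≤ n) (hi : i ≤ n - k) (hj : j ≤ k) (c : ℤ)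
    (hc : c = ((i + j + 1) / 2 : ℕ)) :
    Ich k n i j = arcZ n (i - c) (i + j - c) ∪ arcZ n (n - k + j - c) (n - c) := by
  subst hc
  rw [Ich, Irec, seg_sdiff n i (i + j) (by omega) (by omega),
    seg_sdiff n (n - k + j) n (by omega) le_rfl, image_sub_nat, Finset.image_union, arcZ_add,
    arcZ_add]
  push_cast [hk]
  rfl

lemma Dch_eq (k n i j : ℕ) (hk : k ≤ n) (hi : i ≤ k) (hj : j ≤ n - k) (c : ℤ)
    (hc : c = ((i + j + 1) / 2 : ℕ)) :
    Dch k n i j = arcZ n (0 - c) (i - c) ∪ arcZ n (i + j - c) (k + j - c) := by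
  subst hc
  rw [Dch, Drec, seg_sdiff n (i + j) (k + j) (by omega) (by omega),
    seg_eq, image_sub_nat, Finset.image_union, arcZ_add,
    arcZ_add]
  push_cast
  rfl

lemma mem_Cch (k n : ℕ) (hk : k ≤ n) (I : Finset (ZMod n)) :
    I ∈ Cch k n ↔ MemX n k 0 I := by
  simp only [Cch, Finset.mem_image, Finset.mem_product, Finset.mem_range, Prod.exists]
  constructor
  · rintro ⟨i, j, ⟨hi, hj⟩, rfl⟩
    obtain ⟨c, hc⟩ : ∃ c : ℤ, c = ((i + j + 1) / 2 : ℕ) := ⟨_, rfl⟩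
    refine ⟨_, _, _, _, ?_, ?_, ?_, ?_, ?_, ?_, Ich_eq k n i j hk (by omega) (by omega) c hc⟩
    · omega
    · omega
    · omega
    · omega
    · omega
    · have : (i + j - c + (n - c) : ℤ) = n ∨ (i + j - c + (n - c) : ℤ) = n - 1 := by omega
      rcases this with h | h
      · left; rw [h]; simp
      · right; rw [h]; simp
  · intro h
    obtain ⟨e, p, f, q, h1, h2, h3, h4, h5, h6, rfl⟩ := MemX.norm 0 1 (by simpa using h)
    refine ⟨(n - k - (f - p) : ℤ).toNat, (p - e).toNat, ⟨by omega, by omega⟩, ?_⟩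
    rw [Ich_eq k n _ _ hk (by omega) (by omega) (n - q) (by omega)]
    congr 2 <;> omega

lemma mem_CDch (k n : ℕ) (hk : k ≤ n) (I : Finset (ZMod n)) :
    I ∈ CDch k n ↔ MemX n k k I := by
  simp only [CDch, Finset.mem_image, Finset.mem_product, Finset.mem_range, Prod.exists]
  constructor
  · rintro ⟨i, j, ⟨hi, hj⟩, rfl⟩
    obtain ⟨c, hc⟩ : ∃ c : ℤ, c = ((i + j + 1) / 2 : ℕ) := ⟨_, rfl⟩
    refine ⟨_, _, _, _, ?_, ?_, ?_, ?_, ?_, ?_, Dch_eq k n i j hk (by omega) (by omega) c hc⟩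
    · omega
    · omega
    · omega
    · omega
    · omega
    · have : (i - c + (k + j - c) : ℤ) = k ∨ (i - c + (k + j - c) : ℤ) = k - 1 := by omega
      rcases this with h | h
      · left; rw [h]; simp
      · right; rw [h]; simp
  · intro h
    obtain ⟨e, p, f, q, h1, h2, h3, h4, h5, h6, rfl⟩ := MemX.norm k 0 (by simpa using h)
    refine ⟨(p - e).toNat, (f - p).toNat, ⟨by omega, by omega⟩, ?_⟩
    rw [Dch_eq k n _ _ hk (by omega) (by omega) (-e) (by omega)]
    congr 2 <;> omega

open Classical in
/-- the `t`-th collection -/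
noncomputable def collX (n k : ℕ) [NeZero n] (t : ZMod n) : Finset (Finset (ZMod n)) :=
  Finset.univ.filter (MemX n k t)

lemma mem_collX {n k : ℕ} [NeZero n] {t : ZMod n} {I} : I ∈ collX n k t ↔ MemX n k t I := by
  simp [collX]

lemma MemX.add' {n k : ℕ} {t : ZMod n} {I} (h : MemX n k t I) (r : ZMod n) :
    MemX n k (t + 2 * r) (I.image (fun x => x + r)) := by
  obtain ⟨r, rfl⟩ := ZMod.intCast_surjective r
  exact h.add r

lemma MemX.refl' {n k : ℕ} {t : ZMod n} {I} (h : MemX n k t I) (r : ZMod n) :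
    MemX n k (k - 1 - t + 2 * r) (I.image (fun x => r - x)) := by
  have := h.refl.add' (r - 1)
  rw [Finset.image_image] at this
  convert this using 1
  · ring
  · congr 1; funext x; simp

lemma collX_add {n k : ℕ} [NeZero n] (t r : ZMod n) :
    (collX n k t).image (fun I => I.image (fun x => x + r)) = collX n k (t + 2 * r) := by
  ext I
  simp only [Finset.mem_image, mem_collX]
  constructor
  · rintro ⟨J, hJ, rfl⟩; exact hJ.add' r
  · intro h
    refine ⟨I.image (fun x => x + -r), ?_, ?_⟩
    · have := h.add' (-r)
      convert this using 1; ring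
    · rw [Finset.image_image]
      refine Eq.trans ?_ Finset.image_id
      congr 1
      funext x; simp

lemma collX_refl {n k : ℕ} [NeZero n] (t r : ZMod n) :
    (collX n k t).image (fun I => I.image (fun x => r - x)) = collX n k (k - 1 - t + 2 * r) := by
  ext I
  simp only [Finset.mem_image, mem_collX]
  constructor
  · rintro ⟨J, hJ, rfl⟩; exact hJ.refl' r
  · intro h
    refine ⟨I.image (fun x => r - x), ?_, ?_⟩
    · have := h.refl' r
      convert this using 1; ring
    · rw [Finset.image_image]
      refine Eq.trans ?_ Finset.image_id
      congr 1
      funext x; simp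

lemma dihedral_cases {n : ℕ} {ρ : Equiv.Perm (ZMod n)} (h : ρ ∈ dihedral n) :
    (∃ r, (ρ : ZMod n → ZMod n) = fun x => x + r) ∨ (∃ r, (ρ : ZMod n → ZMod n) = fun x => r - x) := by
  induction h using Subgroup.closure_induction with
  | mem x hx =>
    rcases hx with rfl | rfl
    · left; exact ⟨1, rfl⟩
    · right; exact ⟨2, rfl⟩
  | one => left; exact ⟨0, by funext x; simp⟩
  | mul x y _ _ hx hy =>
    rcases hx with ⟨r, hr⟩ | ⟨r, hr⟩ <;> rcases hy with ⟨s, hs⟩ | ⟨s, hs⟩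
    · left; exact ⟨s + r, by funext z; simp [hr, hs, add_assoc]⟩
    · right; exact ⟨s + r, by funext z; simp only [Equiv.Perm.coe_mul, Function.comp, hr, hs]; ring⟩
    · right; exact ⟨r - s, by funext z; simp only [Equiv.Perm.coe_mul, Function.comp, hr, hs]; ring⟩
    · left; exact ⟨r - s, by funext z; simp only [Equiv.Perm.coe_mul, Function.comp, hr, hs]; ring⟩
  | inv x _ hx =>
    rcases hx with ⟨r, hr⟩ | ⟨r, hr⟩
    · left; refine ⟨-r, ?_⟩
      funext z
      rw [Equiv.Perm.inv_eq_iff_eq, hr]; ring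
    · right; refine ⟨r, ?_⟩
      funext z
      rw [Equiv.Perm.inv_eq_iff_eq, hr]; ring

lemma addRight_mem {n : ℕ} (r : ℤ) : Equiv.addRight (r : ZMod n) ∈ dihedral n := by
  have h1 : Equiv.addRight (1 : ZMod n) ∈ dihedral n := Subgroup.subset_closure (by simp)
  induction r using Int.induction_on with
  | zero =>
    have : Equiv.addRight ((0 : ℤ) : ZMod n) = 1 := by ext x; simp
    rw [this]; exact Subgroup.one_mem _
  | succ i ih =>
    have : Equiv.addRight (((i : ℤ) + 1 : ℤ) : ZMod n) =
        Equiv.addRight (1 : ZMod n) * Equiv.addRight ((i : ℤ) : ZMod n) := by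
      ext x; simp [add_assoc]
    rw [this]; exact Subgroup.mul_mem _ h1 ih
  | pred i ih =>
    have : Equiv.addRight ((-(i : ℤ) - 1 : ℤ) : ZMod n) =
        (Equiv.addRight (1 : ZMod n))⁻¹ * Equiv.addRight ((-(i : ℤ) : ℤ) : ZMod n) := by
      rw [eq_inv_mul_iff_mul_eq]
      ext x; simp [add_assoc]
    rw [this]; exact Subgroup.mul_mem _ (Subgroup.inv_mem _ h1) ih

lemma subLeft_mem {n : ℕ} (r : ℤ) : Equiv.subLeft (r : ZMod n) ∈ dihedral n := by
  have h1 : Equiv.subLeft (2 : ZMod n) ∈ dihedral n := Subgroup.subset_closure (by simp)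
  have : Equiv.subLeft (r : ZMod n) =
      Equiv.addRight ((r - 2 : ℤ) : ZMod n) * Equiv.subLeft (2 : ZMod n) := by
    ext x
    simp only [Equiv.Perm.coe_mul, Function.comp, Equiv.subLeft_apply, Equiv.coe_addRight]
    push_cast
    congr 1
    ring
  rw [this]
  exact Subgroup.mul_mem _ (addRight_mem _) h1

lemma exits_sub {n : ℕ} {e p f q : ℤ} {y : ZMod n} (hy : y ∈ arcZ n e p ∪ arcZ n f q)
    (hy' : y + 1 ∉ arcZ n e p ∪ arcZ n f q) : y = p ∨ y = q := by
  simp only [Finset.mem_union, mem_arcZ] at hy hy'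
  push Not at hy'
  rcases hy with ⟨x, h1, h2, rfl⟩ | ⟨x, h1, h2, rfl⟩
  · left
    by_contra hne
    have : x ≠ p := by rintro rfl; exact hne rfl
    exact hy'.1 (x + 1) (by omega) (by omega) (by push_cast; rfl)
  · right
    by_contra hne
    have : x ≠ q := by rintro rfl; exact hne rfl
    exact hy'.2 (x + 1) (by omega) (by omega) (by push_cast; rfl)

lemma exits_mem {n : ℕ} {e p f q : ℤ} (h1 : e < p) (h2 : p < f) (h3 : f < q) (h4 : q < e + n) :
    ((p : ZMod n) ∈ arcZ n e p ∪ arcZ n f q ∧ (p : ZMod n) + 1 ∉ arcZ n e p ∪ arcZ n f q) ∧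
    ((q : ZMod n) ∈ arcZ n e p ∪ arcZ n f q ∧ (q : ZMod n) + 1 ∉ arcZ n e p ∪ arcZ n f q) ∧
    (p : ZMod n) ≠ q := by
  have key : ∀ a b : ℤ, (a : ZMod n) = b → -n < b - a → b - a < n → a = b := by
    intro a b h hl hu
    obtain ⟨m, hm⟩ := castZ_eq.1 h
    have := small_mul_zero (n := n) (m := m) (by omega) (by omega) (by omega)
    subst this; omega
  simp only [Finset.mem_union, mem_arcZ]
  refine ⟨⟨Or.inl ⟨p, by omega, le_rfl, rfl⟩, ?_⟩, ⟨Or.inr ⟨q, by omega, le_rfl, rfl⟩, ?_⟩, ?_⟩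
  · rintro (⟨x, a, b, c⟩ | ⟨x, a, b, c⟩)
    · have := key x (p + 1) (by push_cast; exact c) (by omega) (by omega)
      omega
    · have := key x (p + 1) (by push_cast; exact c) (by omega) (by omega)
      omega
  · rintro (⟨x, a, b, c⟩ | ⟨x, a, b, c⟩)
    · have := key x (q + 1) (by push_cast; exact c) (by omega) (by omega)
      omega
    · have := key x (q + 1) (by push_cast; exact c) (by omega) (by omega)
      omega
  · intro h
    have := key p q h (by omega) (by omega)
    omega

lemma exits_sum {n k : ℕ} {e p f q : ℤ} (h1 : e < p) (h2 : p < f) (h3 : f < q) (h4 : q < e + n)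
    {t : ZMod n} (h : MemX n k t (arcZ n e p ∪ arcZ n f q)) :
    (p : ZMod n) + q = t ∨ (p : ZMod n) + q = t - 1 := by
  obtain ⟨⟨a1, a2⟩, ⟨b1, b2⟩, hne⟩ := exits_mem h1 h2 h3 h4
  obtain ⟨e', p', f', q', -, -, -, -, -, h6, h7⟩ := h
  rw [h7] at a1 a2 b1 b2
  have ha := exits_sub a1 a2
  have hb := exits_sub b1 b2
  push_cast at h6
  rcases ha with ha | ha <;> rcases hb with hb | hb
  · exact absurd (ha.trans hb.symm) hne
  · rw [ha, hb]; exact h6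
  · rw [ha, hb, add_comm]; exact h6
  · exact absurd (ha.trans hb.symm) hne

/-- nondegenerate members with prescribed exit sum -/
lemma exists_nondeg {n k : ℕ} (hn : 5 ≤ n) (hk : 2 ≤ k) (hkn : k ≤ n - 2) (s : ℤ) :
    ∃ e p f q : ℤ, e < p ∧ p < f ∧ f < q ∧ q < e + n ∧ (p - e) + (q - f) = k ∧ p + q = s := by
  have : ∃ a g : ℤ, 1 ≤ a ∧ a < k ∧ 1 ≤ g ∧ g < n - k ∧ (s - k - a - g) % 2 = 0 := by
    by_cases h0 : (s - k - 1 - 1) % 2 = 0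
    · exact ⟨1, 1, by omega, by omega, by omega, by omega, h0⟩
    · by_cases h3 : 3 ≤ k
      · exact ⟨2, 1, by omega, by omega, by omega, by omega, by omega⟩
      · exact ⟨1, 2, by omega, by omega, by omega, by omega, by omega⟩
  obtain ⟨a, g, ha, hak, hg, hgk, hpar⟩ := this
  obtain ⟨e, he⟩ : ∃ e, e = (s - k - a - g) / 2 := ⟨_, rfl⟩
  exact ⟨e, e + a, e + a + g, e + g + k, by omega, by omega, by omega, by omega, by omega, by omega⟩

lemma collX_inj {n k : ℕ} [NeZero n] (hn : 5 ≤ n) (hk : 2 ≤ k) (hkn : k ≤ n - 2) :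
    Function.Injective (collX n k) := by
  intro t t' htt
  have hmem : ∀ I, MemX n k t I → MemX n k t' I := by
    intro I hI
    rw [← mem_collX, ← htt, mem_collX]; exact hI
  obtain ⟨s, rfl⟩ := ZMod.intCast_surjective t
  have A : (s : ZMod n) = t' ∨ (s : ZMod n) = t' - 1 := by
    obtain ⟨e, p, f, q, h1, h2, h3, h4, h5, h6⟩ := exists_nondeg hn hk hkn s
    have := exits_sum h1 h2 h3 h4 (hmem _ ⟨e, p, f, q, h1.le, h2.le, h3.le, h4.le, h5,
      Or.inl (by rw [h6]), rfl⟩)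
    rw [← h6]; push_cast; exact this
  have B : (s : ZMod n) - 1 = t' ∨ (s : ZMod n) - 1 = t' - 1 := by
    obtain ⟨e, p, f, q, h1, h2, h3, h4, h5, h6⟩ := exists_nondeg hn hk hkn (s - 1)
    have := exits_sum h1 h2 h3 h4 (hmem _ ⟨e, p, f, q, h1.le, h2.le, h3.le, h4.le, h5,
      Or.inr (by rw [h6]; push_cast; rfl), rfl⟩)
    have h6' : (p : ZMod n) + q = s - 1 := by exact_mod_cast congrArg (Int.cast : ℤ → ZMod n) h6
    rw [← h6']; exact this
  rcases A with A | A
  · exact A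
  · rcases B with B | B
    · exfalso
      have h2 : ((2 : ℤ) : ZMod n) = ((0 : ℤ) : ZMod n) := by
        push_cast; linear_combination A - B
      obtain ⟨m, hm⟩ := castZ_eq.1 h2
      have := small_mul_zero (n := n) (m := m) (by omega) (by omega) (by omega)
      subst this; omega
    · linear_combination B

/-- the union of the `D_n`-orbits of the checkboard and dual checkboard
collections has exactly `n` elements. -/
theorem orbits_union_ncard
    (n k : ℕ) (hn : 5 ≤ n) (hk : 2 ≤ k) (hkn : k ≤ n - 2) :
    ({X : Finset (Finset (ZMod n)) | ∃ ρ ∈ dihedral n, X = (Cch k n).image (fun I => I.image ρ)} ∪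
     {X : Finset (Finset (ZMod n)) | ∃ ρ ∈ dihedral n, X = (CDch k n).image (fun I => I.image ρ)}).ncard
      = n := by
  have hkn' : k ≤ n := by omega
  have : NeZero n := ⟨by omega⟩
  have hC : Cch k n = collX n k 0 := by
    ext I; rw [mem_Cch k n hkn', mem_collX]
  have hD : CDch k n = collX n k k := by
    ext I; rw [mem_CDch k n hkn', mem_collX]
  have hset : ({X : Finset (Finset (ZMod n)) | ∃ ρ ∈ dihedral n,
      X = (Cch k n).image (fun I => I.image ρ)} ∪
     {X : Finset (Finset (ZMod n)) | ∃ ρ ∈ dihedral n,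
      X = (CDch k n).image (fun I => I.image ρ)}) = Set.range (collX n k) := by
    rw [hC, hD]
    have gen : ∀ t : ZMod n, ∀ ρ ∈ dihedral n,
        ∃ s, collX n k s = (collX n k t).image (fun I => I.image ρ) := by
      intro t ρ hρ
      rcases dihedral_cases hρ with ⟨r, hr⟩ | ⟨r, hr⟩
      · rw [hr]; exact ⟨_, (collX_add t r).symm⟩
      · rw [hr]; exact ⟨_, (collX_refl t r).symm⟩
    ext X
    constructor
    · rintro (⟨ρ, hρ, rfl⟩ | ⟨ρ, hρ, rfl⟩)
      · exact gen _ ρ hρ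
      · exact gen _ ρ hρ
    · rintro ⟨t, rfl⟩
      obtain ⟨s, rfl⟩ := ZMod.intCast_surjective t
      rcases Int.even_or_odd' s with ⟨u, rfl | rfl⟩
      · left
        refine ⟨_, addRight_mem u, ?_⟩
        refine Eq.trans ?_ (collX_add 0 (u : ZMod n)).symm
        congr 1; push_cast; ring
      · right
        refine ⟨_, subLeft_mem (u + 1), ?_⟩
        refine Eq.trans ?_ (collX_refl (k : ZMod n) ((u + 1 : ℤ) : ZMod n)).symm
        congr 1; push_cast; ring
  rw [hset, ← Set.image_univ, Set.ncard_image_of_injective _ (collX_inj hn hk hkn),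
    Set.ncard_univ, Nat.card_zmod]
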